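/- arXiv:2408.07994 — 3 statements merged into one kernel-verified Lean document; each statement's English description precedes it below -/
import Mathlib

section
/- Let ρ_AB and σ_AB be density matrices on a finite-dimensional bipartite Hilbert space H_A ⊗ H_B, with σ_AB invertible, and let ρ_A, σ_A be their partial traces over H_B. Then S(ρ_AB‖σ_AB) ≥ S(ρ_A‖σ_A). -/
open Matrix ComplexOrder

/-- Partial trace over the second (B) factor. -/
noncomputable def ptraceB {dA dB : ℕ} (ρ : Matrix (Fin dA × Fin dB) (Fin dA × Fin dB) ℂ) :
    Matrix (Fin dA) (Fin dA) ℂ :=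
  fun i i' => ∑ j : Fin dB, ρ (i, j) (i', j)

/-- The matrix logarithm, via the continuous functional calculus. -/
noncomputable def matLog {n : Type*} [Fintype n] [DecidableEq n] (A : Matrix n n ℂ) :
    Matrix n n ℂ :=
  cfc Real.log A

/-- The quantum relative entropy `S(ρ‖σ) = Tr(ρ log ρ − ρ log σ)`. -/
noncomputable def relEnt {n : Type*} [Fintype n] [DecidableEq n] (ρ σ : Matrix n n ℂ) : ℂ :=
  (ρ * matLog ρ).trace - (ρ * matLog σ).trace

/-- Variational functional. -/
noncomputable def varPhi {n : Type*} [Fintype n] (ρ σ : Matrix n n ℂ) (t : ℝ) (Y : Matrix n n ℂ) : ℝ :=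
  2 * (ρ * Y).trace.re - (σ * (Y * Yᴴ)).trace.re - t * (ρ * (Yᴴ * Y)).trace.re

lemma scalar_var (p q t : ℝ) (hp : 0 ≤ p) (hq : 0 < q) (ht : 0 ≤ t) (w z : ℂ) :
    2 * (p * (w * z).re) - q * Complex.normSq z - t * (p * Complex.normSq z) ≤
      Complex.normSq w * (p ^ 2 / (q + t * p)) := by
  have hm : 0 < q + t * p := by positivity
  rw [← mul_div_assoc, le_div_iff₀ hm]
  simp only [Complex.normSq_apply, Complex.mul_re]
  nlinarith [sq_nonneg (p * w.re - (q + t * p) * z.re), sq_nonneg (p * w.im + (q + t * p) * z.im)]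

lemma scalar_var_eq (p q t : ℝ) (hp : 0 ≤ p) (hq : 0 < q) (ht : 0 ≤ t) (w z : ℂ)
    (hz : z = ((p / (q + t * p) : ℝ) : ℂ) * star w) :
    2 * (p * (w * z).re) - q * Complex.normSq z - t * (p * Complex.normSq z) =
      Complex.normSq w * (p ^ 2 / (q + t * p)) := by
  have hm : q + t * p ≠ 0 := by positivity
  subst hz
  simp only [Complex.normSq_apply, Complex.mul_re, Complex.mul_im, Complex.ofReal_re,
    Complex.ofReal_im, Complex.star_def, Complex.conj_re, Complex.conj_im]
  field_simp
  ring

lemma exists_spectral {n : Type*} [Fintype n] [DecidableEq n] (ρ : Matrix n n ℂ)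
    (hρ : ρ.IsHermitian) : ∃ U : Matrix n n ℂ, Uᴴ * U = 1 ∧ U * Uᴴ = 1 ∧
      ρ = U * diagonal (fun i => (hρ.eigenvalues i : ℂ)) * Uᴴ ∧
      matLog ρ = U * diagonal (fun i => ((Real.log (hρ.eigenvalues i) : ℝ) : ℂ)) * Uᴴ := by
  refine ⟨hρ.eigenvectorUnitary, ?_, ?_, ?_, ?_⟩
  · exact Unitary.coe_star_mul_self hρ.eigenvectorUnitary
  · exact Unitary.coe_mul_star_self hρ.eigenvectorUnitary
  · exact hρ.spectral_theorem
  · exact hρ.cfc_eq Real.log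

lemma trace_diag_mul {n : Type*} [Fintype n] [DecidableEq n] (d : n → ℂ) (A B : Matrix n n ℂ) :
    (diagonal d * (A * B)).trace = ∑ i, ∑ j, d i * (A i j * B j i) := by
  simp only [Matrix.trace, Matrix.diag, Matrix.diagonal_mul]
  simp only [Matrix.mul_apply, Finset.mul_sum]

lemma key_rep {n : Type*} [Fintype n] [DecidableEq n] (ρ σ : Matrix n n ℂ)
    (hρ : ρ.PosSemidef) (hσ : σ.PosDef) : ∃ (w : n → n → ℝ) (p q : n → ℝ),
      (∀ i, 0 ≤ p i) ∧ (∀ i, 0 < q i) ∧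
      relEnt ρ σ = ((∑ i, ∑ j, w i j * (p i * Real.log (p i) - p i * Real.log (q j)) : ℝ) : ℂ) ∧
      ρ.trace = ((∑ i, ∑ j, w i j * p i : ℝ) : ℂ) ∧
      (∀ t : ℝ, 0 ≤ t → ∀ Y, varPhi ρ σ t Y ≤ ∑ i, ∑ j, w i j * (p i ^ 2 / (q j + t * p i))) ∧
      (∀ t : ℝ, 0 ≤ t → ∃ Y, varPhi ρ σ t Y = ∑ i, ∑ j, w i j * (p i ^ 2 / (q j + t * p i))) := by
  obtain ⟨U, hU1, hU2, hρe, hlρ⟩ := exists_spectral ρ hρ.1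
  obtain ⟨V, hV1, hV2, hσe, hlσ⟩ := exists_spectral σ hσ.1
  have hp := hρ.eigenvalues_nonneg
  have hq := hσ.eigenvalues_pos
  set p := hρ.1.eigenvalues
  set q := hσ.1.eigenvalues
  obtain ⟨W, hW⟩ : ∃ W, W = Uᴴ * V := ⟨_, rfl⟩
  have hW1 : W * Wᴴ = 1 := by
    rw [hW, conjTranspose_mul, conjTranspose_conjTranspose, Matrix.mul_assoc, ← Matrix.mul_assoc V,
      hV2, Matrix.one_mul, hU1]
  have hWs : ∀ i, ∑ j, Complex.normSq (W i j) = 1 := by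
    intro i
    have := congrFun (congrFun hW1 i) i
    simp only [Matrix.mul_apply, conjTranspose_apply, Complex.star_def, Complex.mul_conj,
      Matrix.one_apply_eq] at this
    exact_mod_cast this
  have hconj : ∀ A B : Matrix n n ℂ, (U * A * Uᴴ * (U * B * Uᴴ)) = U * (A * B) * Uᴴ := by
    intro A B
    calc _ = U * A * (Uᴴ * U) * B * Uᴴ := by simp only [Matrix.mul_assoc]
      _ = _ := by rw [hU1]; simp only [Matrix.mul_assoc, Matrix.one_mul]
  have htr : ∀ A : Matrix n n ℂ, (U * A * Uᴴ).trace = A.trace := by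
    intro A
    rw [Matrix.trace_mul_comm, ← Matrix.mul_assoc, hU1, Matrix.one_mul]
  have hΦ : ∀ t Z, varPhi ρ σ t (V * Z * Uᴴ) = ∑ i, ∑ j,
      (2 * (p i * (W i j * Z j i).re) - q j * Complex.normSq (Z j i)
        - t * (p i * Complex.normSq (Z j i))) := by
    intro t Z
    have e1 : (ρ * (V * Z * Uᴴ)).trace = ∑ i, ∑ j, (p i : ℂ) * (W i j * Z j i) := by
      rw [← trace_diag_mul, hW, ← htr (diagonal _ * _), hρe]
      simp only [Matrix.mul_assoc]
    have e2 : (σ * ((V * Z * Uᴴ) * (V * Z * Uᴴ)ᴴ)).trace =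
        ∑ j, ∑ i, (q j : ℂ) * (Z j i * Zᴴ i j) := by
      rw [← trace_diag_mul, hσe]
      simp only [conjTranspose_mul, conjTranspose_conjTranspose]
      calc _ = (V * (diagonal (fun i => (q i : ℂ)) * (Vᴴ * V) * Z * (Uᴴ * U) * Zᴴ) * Vᴴ).trace := by
            simp only [Matrix.mul_assoc]
        _ = _ := by
            rw [Matrix.trace_mul_comm, ← Matrix.mul_assoc, hV1, hU1]
            simp only [Matrix.mul_assoc, Matrix.one_mul]
    have e3 : (ρ * ((V * Z * Uᴴ)ᴴ * (V * Z * Uᴴ))).trace =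
        ∑ i, ∑ j, (p i : ℂ) * (Zᴴ i j * Z j i) := by
      rw [← trace_diag_mul, hρe]
      simp only [conjTranspose_mul, conjTranspose_conjTranspose]
      calc _ = (U * (diagonal (fun i => (p i : ℂ)) * (Uᴴ * U) * Zᴴ * (Vᴴ * V) * Z) * Uᴴ).trace := by
            simp only [Matrix.mul_assoc]
        _ = _ := by
            rw [htr, hV1, hU1]
            simp only [Matrix.mul_assoc, Matrix.one_mul]
    rw [varPhi, e1, e2, e3, Finset.sum_comm (f := fun j i => (q j : ℂ) * (Z j i * Zᴴ i j))]
    simp only [Complex.re_sum, Finset.mul_sum, ← Finset.sum_sub_distrib, conjTranspose_apply,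
      Complex.star_def, Complex.mul_conj, mul_comm ((starRingEnd ℂ) _), Complex.re_ofReal_mul,
      Complex.ofReal_re]
  have hY : ∀ Y, Y = V * (Vᴴ * Y * U) * Uᴴ := by
    intro Y
    calc Y = (V * Vᴴ) * Y * (U * Uᴴ) := by rw [hV2, hU2]; simp
      _ = _ := by simp only [Matrix.mul_assoc]
  refine ⟨fun i j => Complex.normSq (W i j), p, q, hp, hq, ?_, ?_, ?_, ?_⟩
  · have e1 : (ρ * matLog ρ).trace = ∑ i, ((p i * Real.log (p i) : ℝ) : ℂ) := by
      rw [hlρ]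
      nth_rw 1 [hρe]
      rw [hconj, htr, diagonal_mul_diagonal, trace_diagonal]
      simp
    have e2 : (ρ * matLog σ).trace =
        ∑ i, ∑ j, ((Complex.normSq (W i j) * (p i * Real.log (q j)) : ℝ) : ℂ) := by
      rw [hlσ, hρe]
      have : (U * diagonal (fun i => (p i : ℂ)) * Uᴴ *
          (V * diagonal (fun i => ((Real.log (q i) : ℝ) : ℂ)) * Vᴴ)).trace =
          (diagonal (fun i => (p i : ℂ)) *
            (W * (diagonal (fun i => ((Real.log (q i) : ℝ) : ℂ)) * Wᴴ))).trace := by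
        rw [Matrix.mul_assoc, Matrix.mul_assoc, Matrix.trace_mul_comm, hW]
        simp only [Matrix.mul_assoc, conjTranspose_mul, conjTranspose_conjTranspose]
      rw [this, trace_diag_mul]
      refine Finset.sum_congr rfl fun i _ => Finset.sum_congr rfl fun j _ => ?_
      rw [diagonal_mul, conjTranspose_apply, Complex.star_def]
      push_cast
      rw [← Complex.mul_conj]
      ring
    rw [relEnt, e1, e2]
    simp only [mul_sub, Finset.sum_sub_distrib, ← Finset.sum_mul, hWs, one_mul]
    push_cast
    rfl
  · simp only [← Finset.sum_mul, hWs, one_mul]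
    rw [hρe, htr, trace_diagonal]
    push_cast
    rfl
  · intro t ht Y
    rw [hY Y, hΦ]
    exact Finset.sum_le_sum fun i _ => Finset.sum_le_sum fun j _ =>
      scalar_var _ _ _ (hp i) (hq j) ht _ _
  · intro t ht
    refine ⟨V * (Matrix.of fun j i => ((p i / (q j + t * p i) : ℝ) : ℂ) * star (W i j)) * Uᴴ, ?_⟩
    rw [hΦ]
    exact Finset.sum_congr rfl fun i _ => Finset.sum_congr rfl fun j _ =>
      scalar_var_eq _ _ _ (hp i) (hq j) ht _ _ rfl

lemma trace_ptraceB_mul {dA dB : ℕ} (ρ : Matrix (Fin dA × Fin dB) (Fin dA × Fin dB) ℂ)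
    (Y : Matrix (Fin dA) (Fin dA) ℂ) :
    (ptraceB ρ * Y).trace = (ρ * (kroneckerMap (· * ·) Y (1 : Matrix (Fin dB) (Fin dB) ℂ))).trace := by
  simp only [Matrix.trace, Matrix.diag, Matrix.mul_apply, ptraceB, kroneckerMap_apply,
    Fintype.sum_prod_type, Matrix.one_apply, mul_ite, mul_one, mul_zero, Finset.sum_ite_eq',
    Finset.mem_univ, if_true, Finset.sum_mul]
  exact Finset.sum_congr rfl fun i _ => Finset.sum_comm

lemma varPhi_ptraceB {dA dB : ℕ} (ρ σ : Matrix (Fin dA × Fin dB) (Fin dA × Fin dB) ℂ) (t : ℝ)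
    (Y : Matrix (Fin dA) (Fin dA) ℂ) :
    varPhi (ptraceB ρ) (ptraceB σ) t Y =
      varPhi ρ σ t (kroneckerMap (· * ·) Y (1 : Matrix (Fin dB) (Fin dB) ℂ)) := by
  have h : (kroneckerMap (· * ·) Y (1 : Matrix (Fin dB) (Fin dB) ℂ))ᴴ =
      kroneckerMap (· * ·) Yᴴ (1 : Matrix (Fin dB) (Fin dB) ℂ) := by
    rw [conjTranspose_kronecker, conjTranspose_one]
  simp only [varPhi, trace_ptraceB_mul, h, ← mul_kronecker_mul, Matrix.one_mul]

/-- The truncated integral. -/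
noncomputable def truncG {n : Type*} [Fintype n] (w : n → n → ℝ) (p q : n → ℝ) (t : ℝ) : ℝ :=
  ∑ i, ∑ j, w i j * (p i * (Real.log (q j + t * p i) - Real.log (q j)))

lemma truncG_deriv {n : Type*} [Fintype n] (w : n → n → ℝ) (p q : n → ℝ)
    (hp : ∀ i, 0 ≤ p i) (hq : ∀ i, 0 < q i) (t : ℝ) (ht : 0 ≤ t) :
    HasDerivAt (truncG w p q) (∑ i, ∑ j, w i j * (p i ^ 2 / (q j + t * p i))) t := by
  unfold truncG
  refine HasDerivAt.fun_sum fun i _ => HasDerivAt.fun_sum fun j _ => ?_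
  have hm : q j + t * p i ≠ 0 := by
    have := hp i
    have := hq j
    positivity
  have h1 : HasDerivAt (fun t : ℝ => q j + t * p i) (1 * p i) t :=
    ((hasDerivAt_id t).mul_const (p i)).const_add (q j)
  have h2 := (((h1.log hm).sub_const (Real.log (q j))).const_mul (p i)).const_mul (w i j)
  refine h2.congr_deriv ?_
  ring

open Filter Topology in
lemma truncG_lim {n : Type*} [Fintype n] (w : n → n → ℝ) (p q : n → ℝ)
    (hp : ∀ i, 0 ≤ p i) (hq : ∀ i, 0 < q i) :
    Tendsto (fun t => truncG w p q t - (∑ i, ∑ j, w i j * p i) * Real.log t) atTop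
      (𝓝 (∑ i, ∑ j, w i j * (p i * Real.log (p i) - p i * Real.log (q j)))) := by
  have h : ∀ t, truncG w p q t - (∑ i, ∑ j, w i j * p i) * Real.log t =
      ∑ i, ∑ j, w i j * (p i * (Real.log (q j + t * p i) - Real.log t) - p i * Real.log (q j)) := by
    intro t
    simp only [truncG, Finset.sum_mul, ← Finset.sum_sub_distrib]
    refine Finset.sum_congr rfl fun i _ => Finset.sum_congr rfl fun j _ => ?_
    ring
  simp only [h]
  refine tendsto_finsetSum _ fun i _ => tendsto_finsetSum _ fun j _ => ?_
  refine Tendsto.const_mul _ (Tendsto.sub_const ?_ _)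
  rcases (hp i).eq_or_lt with h0 | h0
  · simp [← h0]
  refine Tendsto.const_mul _ ?_
  have h1 : Tendsto (fun t : ℝ => q j * t⁻¹ + p i) atTop (𝓝 (q j * 0 + p i)) :=
    (tendsto_inv_atTop_zero.const_mul _).add_const _
  rw [mul_zero, zero_add] at h1
  refine (h1.log h0.ne').congr' ?_
  filter_upwards [eventually_gt_atTop 0] with t ht
  have := hq j
  rw [← Real.log_div (by positivity) ht.ne']
  congr 1
  field_simp

/-- monotonicity of relative entropy under partial trace.
For density matrices `ρ_AB, σ_AB` on `H_A ⊗ H_B` with `σ_AB` invertible,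
`S(ρ_AB ‖ σ_AB) ≥ S(ρ_A ‖ σ_A)` where `ρ_A, σ_A` are the partial traces over `H_B`. -/
theorem relative_entropy_monotone_under_partial_trace {dA dB : ℕ}
    (ρ σ : Matrix (Fin dA × Fin dB) (Fin dA × Fin dB) ℂ)
    (hρ : ρ.PosSemidef) (hρ1 : ρ.trace = 1)
    (hσ : σ.PosSemidef) (hσ1 : σ.trace = 1) (hσu : IsUnit σ) :
    relEnt (ptraceB ρ) (ptraceB σ) ≤ relEnt ρ σ := by
  have hσd : σ.PosDef := hσ.posDef_iff_isUnit.mpr hσu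
  have hB : Nonempty (Fin dB) := by
    by_contra h
    rw [not_nonempty_iff] at h
    simp [Matrix.trace] at hσ1
  have hpt : ∀ τ : Matrix (Fin dA × Fin dB) (Fin dA × Fin dB) ℂ, ptraceB τ =
      ∑ j, τ.submatrix (fun i => (i, j)) (fun i => (i, j)) := by
    intro τ
    ext i i'
    simp [ptraceB, Matrix.sum_apply]
  have hρA : (ptraceB ρ).PosSemidef := by
    rw [hpt]
    exact Matrix.posSemidef_sum _ fun j _ => hρ.submatrix _
  have hσA : (ptraceB σ).PosDef := by
    rw [hpt]
    refine Matrix.posDef_sum Finset.univ_nonempty fun j _ => hσd.submatrix ?_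
    intro a b hab
    simpa using hab
  have htr : (ptraceB ρ).trace = ρ.trace := by
    simp [Matrix.trace, ptraceB, Fintype.sum_prod_type]
  obtain ⟨w, p, q, hp, hq, hS, hT, hle, -⟩ := key_rep ρ σ hρ hσd
  obtain ⟨w', p', q', hp', hq', hS', hT', -, heq⟩ := key_rep _ _ hρA hσA
  have hTT : (∑ i, ∑ j, w' i j * p' i : ℝ) = ∑ i, ∑ j, w i j * p i := by
    rw [hT, hT'] at htr
    exact_mod_cast htr
  have hder : ∀ t : ℝ, 0 ≤ t → ∑ i, ∑ j, w' i j * (p' i ^ 2 / (q' j + t * p' i)) ≤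
      ∑ i, ∑ j, w i j * (p i ^ 2 / (q j + t * p i)) := by
    intro t ht
    obtain ⟨Y, hY⟩ := heq t ht
    rw [← hY, varPhi_ptraceB]
    exact hle t ht _
  have hd : ∀ t : ℝ, 0 ≤ t → HasDerivAt (fun t => truncG w p q t - truncG w' p' q' t)
      ((∑ i, ∑ j, w i j * (p i ^ 2 / (q j + t * p i))) -
        ∑ i, ∑ j, w' i j * (p' i ^ 2 / (q' j + t * p' i))) t := fun t ht =>
    (truncG_deriv w p q hp hq t ht).sub (truncG_deriv w' p' q' hp' hq' t ht)
  have hmono : MonotoneOn (fun t => truncG w p q t - truncG w' p' q' t) (Set.Ici 0) := by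
    refine monotoneOn_of_deriv_nonneg (convex_Ici 0)
      (fun t ht => (hd t ht).continuousAt.continuousWithinAt) ?_ ?_
    · intro t ht
      rw [interior_Ici] at ht
      exact (hd t (le_of_lt ht)).differentiableAt.differentiableWithinAt
    · intro t ht
      rw [interior_Ici] at ht
      rw [(hd t (le_of_lt ht)).deriv]
      exact sub_nonneg.mpr (hder t (le_of_lt ht))
  have hfin : ∀ t : ℝ, 0 ≤ t → truncG w' p' q' t ≤ truncG w p q t := by
    intro t ht
    have := hmono (Set.mem_Ici.mpr le_rfl) (Set.mem_Ici.mpr ht) ht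
    simp only [truncG, zero_mul, add_zero, sub_self, mul_zero, Finset.sum_const_zero] at this
    simpa [truncG] using this
  rw [hS, hS']
  refine Complex.real_le_real.mpr ?_
  refine le_of_tendsto_of_tendsto (truncG_lim w' p' q' hp' hq') (truncG_lim w p q hp hq) ?_
  filter_upwards [Filter.eventually_ge_atTop 0] with t ht
  rw [hTT]
  exact sub_le_sub_right (hfin t ht) _
end

section
/- Let A and B be Hermitian matrices with A positive definite. Then d/ds log(A + sB) at s = 0 equals the integral ∫_0^∞ (A + u)^{-1} B (A + u)^{-1} du; in particular, Tr(ρ · d/ds log(A + sB)|_{s=0}) = Tr((∫_0^∞ (A+u)^{-1} ρ (A+u)^{-1} du) B) for any matrix ρ. -/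
open Matrix MeasureTheory ComplexOrder

attribute [local instance] Matrix.frobeniusNormedAddCommGroup Matrix.frobeniusNormedSpace

section helpers

open Filter Topology

variable {n : ℕ}

/-- Spectral decomposition of a Hermitian matrix, with the functional calculus. -/
lemma spec_decomp (X : Matrix (Fin n) (Fin n) ℂ) (hX : X.IsHermitian) :
    ∃ (l : Fin n → ℝ) (P : Fin n → Matrix (Fin n) (Fin n) ℂ),
      (∀ k, (P k).PosSemidef) ∧ (∑ k, P k = 1) ∧ (∑ k, l k • P k = X) ∧
      (∀ f : ℝ → ℝ, cfc f X = ∑ k, f (l k) • P k) ∧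
      (X.PosDef → ∀ k, 0 < l k) ∧
      (∀ a b : Fin n → ℝ, (∑ k, a k • P k) * (∑ k, b k • P k) = ∑ k, (a k * b k) • P k) := by
  set U : Matrix (Fin n) (Fin n) ℂ := (hX.eigenvectorUnitary : Matrix (Fin n) (Fin n) ℂ) with hU
  have hUU : star U * U = 1 := Unitary.coe_star_mul_self hX.eigenvectorUnitary
  have hUU' : U * star U = 1 := Unitary.coe_mul_star_self hX.eigenvectorUnitary
  have key : ∀ a : Fin n → ℝ, U * diagonal (fun k => (a k : ℂ)) * star U
      = ∑ k, a k • (U * Matrix.single k k (1:ℂ) * star U) := by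
    intro a
    have : diagonal (fun k => (a k : ℂ)) = ∑ k, a k • Matrix.single k k (1:ℂ) := by
      rw [← Matrix.sum_single_eq_diagonal]
      refine Finset.sum_congr rfl fun k _ => ?_
      rw [Matrix.smul_single]
      simp
    rw [this, Finset.mul_sum, Finset.sum_mul]
    refine Finset.sum_congr rfl fun k _ => ?_
    rw [mul_smul_comm, smul_mul_assoc]
  refine ⟨hX.eigenvalues, fun k => U * Matrix.single k k 1 * star U, ?_, ?_, ?_, ?_, ?_, ?_⟩
  · intro k
    have h1 : (Matrix.single k k (1:ℂ)).PosSemidef := by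
      rw [← Matrix.diagonal_single]
      rw [Matrix.posSemidef_diagonal_iff]
      intro i
      by_cases h : i = k
      · subst h; simp
      · simp [h]
    exact h1.mul_mul_conjTranspose_same U
  · have := key (fun _ => 1)
    simp only [one_smul] at this
    rw [← this]
    simp [hUU']
  · rw [← key]
    conv_rhs => rw [hX.spectral_theorem]
    rfl
  · intro f
    rw [← key (fun k => f (hX.eigenvalues k))]
    rw [hX.cfc_eq]
    rfl
  · intro h k
    exact h.eigenvalues_pos k
  · intro a b
    rw [← key, ← key, ← key]
    calc _ = U * diagonal (fun k => (a k : ℂ)) * (star U * U) * diagonal (fun k => (b k : ℂ)) * star U := by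
          simp only [mul_assoc]
      _ = _ := by
          rw [hUU, mul_one, mul_assoc U, diagonal_mul_diagonal]
          push_cast; rfl

lemma exists_pos_lower (l : Fin n → ℝ) (h : ∀ k, 0 < l k) : ∃ c > 0, ∀ k, c ≤ l k := by
  rcases isEmpty_or_nonempty (Fin n) with he | he
  · exact ⟨1, one_pos, fun k => (he.false k).elim⟩
  · obtain ⟨k, hk⟩ := Finite.exists_min l
    exact ⟨l k, h k, hk⟩

lemma posDef_eventually (A B : Matrix (Fin n) (Fin n) ℂ) (hA : A.PosDef) (hB : B.IsHermitian) :
    ∀ᶠ s : ℝ in 𝓝 0, (A + s • B).PosDef := by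
  obtain ⟨l, P, hP, hP1, hPX, -, hl, -⟩ := spec_decomp A hA.1
  obtain ⟨m, Q, hQ, hQ1, hQX, -, -, -⟩ := spec_decomp B hB
  obtain ⟨c, hc, hcl⟩ := exists_pos_lower l (hl hA)
  set M := ∑ k, |m k| with hM
  have hmM : ∀ k, |m k| ≤ M := fun k =>
    Finset.single_le_sum (f := fun k => |m k|) (fun i _ => abs_nonneg _) (Finset.mem_univ k)
  have hlim : ∀ᶠ s : ℝ in 𝓝 0, 0 < c - |s| * M := by
    have : ContinuousAt (fun s : ℝ => c - |s| * M) 0 := by fun_prop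
    exact this.eventually (lt_mem_nhds (by simpa using hc))
  filter_upwards [hlim] with s hs
  have e : A + s • B = (c - |s| * M) • (1 : Matrix (Fin n) (Fin n) ℂ)
      + (∑ k, (l k - c) • P k + ∑ k, (|s| * M + s * m k) • Q k) := by
    simp only [sub_smul, add_smul, Finset.sum_sub_distrib, Finset.sum_add_distrib, hPX,
      ← Finset.smul_sum, hP1, hQ1, mul_smul s, hQX]
    abel
  rw [e]
  refine Matrix.PosDef.add_posSemidef ?_ (Matrix.PosSemidef.add ?_ ?_)
  · exact Matrix.PosDef.one.smul hs
  · exact Matrix.posSemidef_sum _ fun k _ => (hP k).smul (sub_nonneg.2 (hcl k))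
  · refine Matrix.posSemidef_sum _ fun k _ => (hQ k).smul ?_
    have h1 : |s * m k| ≤ |s| * M := by
      rw [abs_mul]; exact mul_le_mul_of_nonneg_left (hmM k) (abs_nonneg s)
    linarith [neg_abs_le (s * m k)]

/-- Shifted matrix is positive definite. -/
lemma posDef_shift (X : Matrix (Fin n) (Fin n) ℂ) (hX : X.PosDef) (u : ℝ) (hu : 0 ≤ u) :
    (X + u • (1 : Matrix (Fin n) (Fin n) ℂ)).PosDef :=
  hX.add_posSemidef (Matrix.PosSemidef.one.smul hu)

/-- Spectral form of the resolvent together with the logarithm. -/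
lemma resolvent_decomp (X : Matrix (Fin n) (Fin n) ℂ) (hX : X.PosDef) :
    ∃ (l : Fin n → ℝ) (P : Fin n → Matrix (Fin n) (Fin n) ℂ), (∀ k, 0 < l k) ∧ (∑ k, P k = 1) ∧
      matLog X = ∑ k, Real.log (l k) • P k ∧
      ∀ u : ℝ, 0 < u → (X + u • (1 : Matrix (Fin n) (Fin n) ℂ))⁻¹ = ∑ k, (l k + u)⁻¹ • P k := by
  obtain ⟨l, P, hP, hP1, hPX, hf, hl, hm⟩ := spec_decomp X hX.1
  refine ⟨l, P, hl hX, hP1, hf _, fun u hu => ?_⟩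
  apply Matrix.inv_eq_right_inv
  have : X + u • (1 : Matrix (Fin n) (Fin n) ℂ) = ∑ k, (l k + u) • P k := by
    simp only [add_smul, Finset.sum_add_distrib, hPX, ← Finset.smul_sum, hP1]
  rw [this, hm, ← hP1]
  refine Finset.sum_congr rfl fun k _ => ?_
  have := hl hX k
  rw [mul_inv_cancel₀ (by positivity), one_smul]

lemma integrable_inv_sq (a : ℝ) (ha : 0 < a) :
    IntegrableOn (fun u : ℝ => ((a + u)⁻¹) ^ 2) (Set.Ioi 0) := by
  have h := integrableOn_add_rpow_Ioi_of_lt (a := -2) (c := 0) (m := a) (by norm_num) (by linarith)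
  refine h.congr_fun (fun u hu => ?_) measurableSet_Ioi
  have hu' : (0:ℝ) < u := hu
  simp only
  rw [Real.rpow_neg (by positivity), add_comm a u]
  norm_num

lemma integrable_inv_mul (a b : ℝ) (ha : 0 < a) (hb : 0 < b) :
    IntegrableOn (fun u : ℝ => (a + u)⁻¹ * (b + u)⁻¹) (Set.Ioi 0) := by
  refine ((integrable_inv_sq a ha).add (integrable_inv_sq b hb)).mono' ?_ ?_
  · exact (by fun_prop : Measurable fun u : ℝ => (a + u)⁻¹ * (b + u)⁻¹).aestronglyMeasurable
  · refine Eventually.of_forall fun u => ?_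
    simp only [Pi.add_apply, Real.norm_eq_abs]
    rw [abs_le]
    constructor <;> nlinarith [sq_nonneg ((a + u)⁻¹ + (b + u)⁻¹), sq_nonneg ((a + u)⁻¹ - (b + u)⁻¹),
      sq_nonneg ((a + u)⁻¹), sq_nonneg ((b + u)⁻¹)]

lemma log_integrand_integrable (x : ℝ) (hx : 0 < x) :
    IntegrableOn (fun u : ℝ => (1 + u)⁻¹ - (x + u)⁻¹) (Set.Ioi 0) := by
  refine IntegrableOn.congr_fun ((integrable_inv_mul 1 x one_pos hx).const_mul (x - 1))
    (fun u hu => ?_) measurableSet_Ioi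
  have hu' : (0:ℝ) < u := hu
  have h1 : (1 + u) ≠ 0 := by positivity
  have h2 : (x + u) ≠ 0 := by positivity
  field_simp
  ring

lemma log_integral (x : ℝ) (hx : 0 < x) :
    ∫ u in Set.Ioi (0:ℝ), ((1 + u)⁻¹ - (x + u)⁻¹) = Real.log x := by
  have h := integral_Ioi_of_hasDerivAt_of_tendsto' (a := (0:ℝ)) (m := (0:ℝ))
    (f := fun u => Real.log ((1 + u) / (x + u))) (f' := fun u => (1 + u)⁻¹ - (x + u)⁻¹)
    ?_ (log_integrand_integrable x hx) ?_
  · rw [h]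
    simp
  · intro u hu
    have hu' : (0:ℝ) ≤ u := hu
    have h1 : HasDerivAt (fun u : ℝ => (1 + u) / (x + u))
        ((1 * (x + u) - (1 + u) * 1) / (x + u) ^ 2) u :=
      ((hasDerivAt_id u).const_add 1).div ((hasDerivAt_id u).const_add x) (by positivity)
    have h2 := h1.log (by positivity)
    have h3 : (1 + u) ≠ 0 := by positivity
    have h4 : (x + u) ≠ 0 := by positivity
    refine h2.congr_deriv ?_
    field_simp
  · have h1 : Tendsto (fun u : ℝ => (1 + u) / (x + u)) atTop (𝓝 1) := by
      have h3 : Tendsto (fun u : ℝ => (1 - x) * (x + u)⁻¹ + 1) atTop (𝓝 ((1 - x) * 0 + 1)) :=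
        ((tendsto_inv_atTop_zero.comp (tendsto_atTop_add_const_left _ x tendsto_id)).const_mul
          _).add_const 1
      simp only [mul_zero, zero_add] at h3
      refine h3.congr' ?_
      filter_upwards [eventually_gt_atTop 0] with u hu
      field_simp
      ring
    have := h1.log one_ne_zero
    simpa using this

section frob

/-- The uniform structure of the Frobenius norm. -/
noncomputable abbrev frobUniform (n : ℕ) : UniformSpace (Matrix (Fin n) (Fin n) ℂ) :=
  PseudoMetricSpace.toUniformSpace

/-- The topology of the Frobenius norm. -/
noncomputable abbrev frobTopology (n : ℕ) : TopologicalSpace (Matrix (Fin n) (Fin n) ℂ) :=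
  (PseudoMetricSpace.toUniformSpace (α := Matrix (Fin n) (Fin n) ℂ)).toTopologicalSpace

attribute [local instance] frobUniform frobTopology

/-- Integral representation of the logarithm. -/
lemma matLog_integral (X : Matrix (Fin n) (Fin n) ℂ) (hX : X.PosDef) :
    IntegrableOn (fun u : ℝ => (1 + u)⁻¹ • (1 : Matrix (Fin n) (Fin n) ℂ)
        - (X + u • (1 : Matrix (Fin n) (Fin n) ℂ))⁻¹) (Set.Ioi 0) ∧
    matLog X = ∫ u in Set.Ioi (0:ℝ), ((1 + u)⁻¹ • (1 : Matrix (Fin n) (Fin n) ℂ)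
        - (X + u • (1 : Matrix (Fin n) (Fin n) ℂ))⁻¹) := by
  obtain ⟨l, P, hl, hP1, hlog, hR⟩ := resolvent_decomp X hX
  have e : ∀ u ∈ Set.Ioi (0:ℝ), (∑ k, ((1 + u)⁻¹ - (l k + u)⁻¹) • P k) =
      (1 + u)⁻¹ • (1 : Matrix (Fin n) (Fin n) ℂ) - (X + u • (1 : Matrix (Fin n) (Fin n) ℂ))⁻¹ := by
    intro u hu
    rw [hR u hu, ← hP1, Finset.smul_sum, ← Finset.sum_sub_distrib]
    simp only [sub_smul]
  have hi : ∀ k, IntegrableOn (fun u : ℝ => ((1 + u)⁻¹ - (l k + u)⁻¹) • P k) (Set.Ioi 0) :=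
    fun k => (log_integrand_integrable (l k) (hl k)).smul_const (P k)
  constructor
  · refine IntegrableOn.congr_fun ?_ e measurableSet_Ioi
    exact integrable_finsetSum _ fun k _ => hi k
  · rw [← setIntegral_congr_fun measurableSet_Ioi e, integral_finsetSum _ fun k _ => hi k, hlog]
    refine Finset.sum_congr rfl fun k _ => ?_
    rw [integral_smul_const, log_integral _ (hl k)]

/-- Norm bound on the resolvent. -/
lemma resolvent_bound (X : Matrix (Fin n) (Fin n) ℂ) (hX : X.PosDef) :
    ∃ c > 0, ∃ C ≥ 0, ∀ u : ℝ, 0 < u →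
      ‖(X + u • (1 : Matrix (Fin n) (Fin n) ℂ))⁻¹‖ ≤ C * (c + u)⁻¹ := by
  obtain ⟨l, P, hl, hP1, hlog, hR⟩ := resolvent_decomp X hX
  obtain ⟨c, hc, hcl⟩ := exists_pos_lower l hl
  refine ⟨c, hc, ∑ k, ‖P k‖, by positivity, fun u hu => ?_⟩
  rw [hR u hu, Finset.sum_mul]
  refine norm_sum_le_of_le _ fun k _ => ?_
  have := hl k
  rw [norm_smul, mul_comm, Real.norm_of_nonneg (by positivity)]
  gcongr
  exact hcl k

/-- Measurability of sandwiched resolvents. -/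
lemma resolvent_meas (X Y B : Matrix (Fin n) (Fin n) ℂ) (hX : X.PosDef) (hY : Y.PosDef) :
    AEStronglyMeasurable (fun u : ℝ => (X + u • (1 : Matrix (Fin n) (Fin n) ℂ))⁻¹ * B *
      (Y + u • (1 : Matrix (Fin n) (Fin n) ℂ))⁻¹) (volume.restrict (Set.Ioi 0)) := by
  obtain ⟨l, P, hl, -, -, hR⟩ := resolvent_decomp X hX
  obtain ⟨m, Q, hm, -, -, hS⟩ := resolvent_decomp Y hY
  have e : ∀ u ∈ Set.Ioi (0:ℝ), (∑ k, ∑ j, ((l k + u)⁻¹ * (m j + u)⁻¹) • (P k * B * Q j)) =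
      (X + u • (1 : Matrix (Fin n) (Fin n) ℂ))⁻¹ * B *
      (Y + u • (1 : Matrix (Fin n) (Fin n) ℂ))⁻¹ := by
    intro u hu
    rw [hR u hu, hS u hu]
    simp only [Finset.sum_mul, Finset.mul_sum, smul_mul_assoc, mul_smul_comm, smul_smul, Finset.smul_sum]
    rw [Finset.sum_comm]
    refine Finset.sum_congr rfl fun k _ => Finset.sum_congr rfl fun j _ => ?_
    rw [mul_comm]
  refine AEStronglyMeasurable.congr ?_ ((ae_restrict_mem measurableSet_Ioi).mono e)
  refine Finset.aestronglyMeasurable_fun_sum _ fun k _ =>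
    Finset.aestronglyMeasurable_fun_sum _ fun j _ => ?_
  exact (by fun_prop : Measurable fun u : ℝ =>
    (l k + u)⁻¹ * (m j + u)⁻¹).aestronglyMeasurable.smul_const _

lemma norm_mul3_le (R B S : Matrix (Fin n) (Fin n) ℂ) : ‖R * B * S‖ ≤ ‖R‖ * ‖B‖ * ‖S‖ :=
  (Matrix.frobenius_norm_mul _ _).trans
    (mul_le_mul_of_nonneg_right (Matrix.frobenius_norm_mul _ _) (norm_nonneg _))

lemma sandwich_integrable (X B : Matrix (Fin n) (Fin n) ℂ) (hX : X.PosDef) :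
    IntegrableOn (fun u : ℝ => (X + u • (1 : Matrix (Fin n) (Fin n) ℂ))⁻¹ * B *
      (X + u • (1 : Matrix (Fin n) (Fin n) ℂ))⁻¹) (Set.Ioi 0) := by
  obtain ⟨c, hc, C, hC, hb⟩ := resolvent_bound X hX
  refine Integrable.mono' ((integrable_inv_sq c hc).const_mul (C * ‖B‖ * C))
    (resolvent_meas X X B hX hX) ?_
  filter_upwards [ae_restrict_mem measurableSet_Ioi] with u hu
  have hu' : (0:ℝ) < u := hu
  have h := hb u hu
  calc _ ≤ _ := norm_mul3_le _ _ _
    _ ≤ (C * (c + u)⁻¹) * ‖B‖ * (C * (c + u)⁻¹) := by gcongr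
    _ = _ := by ring

/-- The resolvent identity. -/
lemma resolvent_identity (R S B : Matrix (Fin n) (Fin n) ℂ) (s : ℝ) (hR : IsUnit R)
    (hS : S = R + s • B) (hSu : IsUnit S) : R⁻¹ - S⁻¹ = s • (S⁻¹ * B * R⁻¹) := by
  have h1 : R * R⁻¹ = 1 := Matrix.mul_nonsing_inv _ ((Matrix.isUnit_iff_isUnit_det _).1 hR)
  have h2 : S⁻¹ * S = 1 := Matrix.nonsing_inv_mul _ ((Matrix.isUnit_iff_isUnit_det _).1 hSu)
  have h3 : s • B = S - R := by rw [hS]; abel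
  rw [← smul_mul_assoc, ← mul_smul_comm, h3, mul_sub, sub_mul, h2, one_mul, mul_assoc, h1, mul_one]


lemma main_aux {n : ℕ}
    (A B : Matrix (Fin n) (Fin n) ℂ)
    (hA : A.PosDef) (hB : B.IsHermitian) :
    HasDerivAt (fun s : ℝ => matLog (A + s • B))
      (∫ u in Set.Ioi (0 : ℝ),
        (A + u • (1 : Matrix (Fin n) (Fin n) ℂ))⁻¹ * B *
          (A + u • (1 : Matrix (Fin n) (Fin n) ℂ))⁻¹) 0 ∧
    ∀ ρ : Matrix (Fin n) (Fin n) ℂ,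
      (ρ * ∫ u in Set.Ioi (0 : ℝ),
          (A + u • (1 : Matrix (Fin n) (Fin n) ℂ))⁻¹ * B *
            (A + u • (1 : Matrix (Fin n) (Fin n) ℂ))⁻¹).trace =
        ((∫ u in Set.Ioi (0 : ℝ),
            (A + u • (1 : Matrix (Fin n) (Fin n) ℂ))⁻¹ * ρ *
              (A + u • (1 : Matrix (Fin n) (Fin n) ℂ))⁻¹) * B).trace := by
  constructor
  · rw [hasDerivAt_iff_tendsto_slope_zero]
    obtain ⟨c, hc, C, hC, hb⟩ := resolvent_bound A hA
    have hpd := posDef_eventually A B hA hB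
    have hsmall : ∀ᶠ s : ℝ in nhds 0, |s| * (‖B‖ * (C * c⁻¹)) < 1 / 2 := by
      have : ContinuousAt (fun s : ℝ => |s| * (‖B‖ * (C * c⁻¹))) 0 := by fun_prop
      exact this.eventually (gt_mem_nhds (by simp))
    -- resolvent identity along the perturbation
    have hid : ∀ s : ℝ, (A + s • B).PosDef → ∀ u : ℝ, 0 < u →
        (A + u • (1 : Matrix (Fin n) (Fin n) ℂ))⁻¹ - (A + s • B + u • 1)⁻¹ =
        s • ((A + s • B + u • (1 : Matrix (Fin n) (Fin n) ℂ))⁻¹ * B * (A + u • 1)⁻¹) := by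
      intro s hs u hu
      exact resolvent_identity _ _ _ _ (posDef_shift A hA u hu.le).isUnit (by abel)
        (posDef_shift _ hs u hu.le).isUnit
    -- uniform bound
    have hbd : ∀ s : ℝ, (A + s • B).PosDef → |s| * (‖B‖ * (C * c⁻¹)) < 1 / 2 → ∀ u : ℝ, 0 < u →
        ‖(A + s • B + u • (1 : Matrix (Fin n) (Fin n) ℂ))⁻¹‖ ≤ 2 * (C * (c + u)⁻¹) := by
      intro s hs hs' u hu
      have h1 := hid s hs u hu
      set R := (A + u • (1 : Matrix (Fin n) (Fin n) ℂ))⁻¹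
      set S := (A + s • B + u • (1 : Matrix (Fin n) (Fin n) ℂ))⁻¹
      have h2 : S = R - s • (S * B * R) := by rw [← h1]; abel
      have hRb : ‖R‖ ≤ C * (c + u)⁻¹ := hb u hu
      have hRc : ‖R‖ ≤ C * c⁻¹ := by
        refine hRb.trans ?_
        gcongr
        linarith
      have h3 : ‖S‖ ≤ ‖R‖ + |s| * (‖S‖ * ‖B‖ * ‖R‖) := by
        calc ‖S‖ = ‖R - s • (S * B * R)‖ := by rw [← h2]
          _ ≤ ‖R‖ + ‖s • (S * B * R)‖ := norm_sub_le _ _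
          _ ≤ _ := by
            rw [norm_smul, Real.norm_eq_abs]
            gcongr
            exact norm_mul3_le _ _ _
      have h4 : |s| * (‖S‖ * ‖B‖ * ‖R‖) ≤ ‖S‖ * (1 / 2) := by
        calc |s| * (‖S‖ * ‖B‖ * ‖R‖) ≤ |s| * (‖S‖ * ‖B‖ * (C * c⁻¹)) := by gcongr
          _ = ‖S‖ * (|s| * (‖B‖ * (C * c⁻¹))) := by ring
          _ ≤ _ := by gcongr
      linarith
    have hmain : Filter.Tendsto (fun s : ℝ => ∫ u in Set.Ioi (0 : ℝ),
        (A + s • B + u • (1 : Matrix (Fin n) (Fin n) ℂ))⁻¹ * B *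
          (A + u • (1 : Matrix (Fin n) (Fin n) ℂ))⁻¹) (nhds 0)
        (nhds (∫ u in Set.Ioi (0 : ℝ), (A + u • (1 : Matrix (Fin n) (Fin n) ℂ))⁻¹ * B *
          (A + u • (1 : Matrix (Fin n) (Fin n) ℂ))⁻¹)) := by
      refine tendsto_integral_filter_of_dominated_convergence
        (fun u => (2 * C * ‖B‖ * C) * ((c + u)⁻¹) ^ 2) ?_ ?_ ?_ ?_
      · filter_upwards [hpd] with s hs
        exact resolvent_meas _ _ B hs hA
      · filter_upwards [hpd, hsmall] with s hs hs'
        filter_upwards [ae_restrict_mem measurableSet_Ioi] with u hu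
        have hu' : (0:ℝ) < u := hu
        have h1 := hbd s hs hs' u hu
        have h2 := hb u hu
        calc _ ≤ _ := norm_mul3_le _ _ _
          _ ≤ (2 * (C * (c + u)⁻¹)) * ‖B‖ * (C * (c + u)⁻¹) := by gcongr
          _ = _ := by ring
      · exact (integrable_inv_sq c hc).const_mul _
      · filter_upwards [ae_restrict_mem measurableSet_Ioi] with u hu
        have hu' : (0:ℝ) < u := hu
        have hlim : Filter.Tendsto
            (fun s : ℝ => (A + s • B + u • (1 : Matrix (Fin n) (Fin n) ℂ))⁻¹) (nhds 0)
            (nhds (A + u • (1 : Matrix (Fin n) (Fin n) ℂ))⁻¹) := by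
          rw [tendsto_iff_norm_sub_tendsto_zero]
          set K := (2 * (C * (c + u)⁻¹)) * ‖B‖ * (C * (c + u)⁻¹) with hK
          have h0 : Filter.Tendsto (fun s : ℝ => |s| * K) (nhds 0) (nhds 0) := by
            have : ContinuousAt (fun s : ℝ => |s| * K) 0 := by fun_prop
            simpa [ContinuousAt] using this
          refine squeeze_zero' (Filter.Eventually.of_forall fun _ => norm_nonneg _) ?_ h0
          filter_upwards [hpd, hsmall] with s hs hs'
          rw [norm_sub_rev, hid s hs u hu, norm_smul, Real.norm_eq_abs]
          have h1 := hbd s hs hs' u hu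
          have h2 := hb u hu
          refine mul_le_mul_of_nonneg_left ?_ (abs_nonneg s)
          refine (norm_mul3_le _ _ _).trans ?_
          rw [hK]
          gcongr
        have hcont : Continuous (fun M : Matrix (Fin n) (Fin n) ℂ =>
            M * B * (A + u • (1 : Matrix (Fin n) (Fin n) ℂ))⁻¹) :=
          LinearMap.continuous_of_finiteDimensional
            ((LinearMap.mulRight ℝ (A + u • (1 : Matrix (Fin n) (Fin n) ℂ))⁻¹).comp
              (LinearMap.mulRight ℝ B))
        exact (hcont.tendsto _).comp hlim
    refine (hmain.mono_left nhdsWithin_le_nhds).congr' ?_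
    filter_upwards [hpd.filter_mono nhdsWithin_le_nhds, self_mem_nhdsWithin] with s hs hs0
    have hs0' : s ≠ 0 := hs0
    obtain ⟨i1, e1⟩ := matLog_integral _ hs
    obtain ⟨i2, e2⟩ := matLog_integral A hA
    simp only [zero_add, zero_smul, add_zero]
    rw [e1, e2, ← integral_sub i1 i2, ← integral_smul]
    refine setIntegral_congr_fun measurableSet_Ioi fun u hu => ?_
    simp only [sub_sub_sub_cancel_left]
    rw [hid s hs u hu, smul_smul, inv_mul_cancel₀ hs0', one_smul]
  · intro ρ
    have i1 := sandwich_integrable A B hA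
    have i2 := sandwich_integrable A ρ hA
    let L1 : Matrix (Fin n) (Fin n) ℂ →L[ℝ] ℂ := LinearMap.toContinuousLinearMap
      ((Matrix.traceLinearMap (Fin n) ℝ ℂ).comp (LinearMap.mulLeft ℝ ρ))
    let L2 : Matrix (Fin n) (Fin n) ℂ →L[ℝ] ℂ := LinearMap.toContinuousLinearMap
      ((Matrix.traceLinearMap (Fin n) ℝ ℂ).comp (LinearMap.mulRight ℝ B))
    have h1 := L1.integral_comp_comm i1
    have h2 := L2.integral_comp_comm i2
    refine (h1.symm.trans ?_).trans h2
    refine setIntegral_congr_fun measurableSet_Ioi fun u hu => ?_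
    change (ρ * (_ * B * _)).trace = ((_ * ρ * _) * B).trace
    rw [← mul_assoc, Matrix.trace_mul_comm]
    simp only [mul_assoc]

end frob

end helpers

theorem deriv_matLog_integral_representation {n : ℕ}
    (A B : Matrix (Fin n) (Fin n) ℂ)
    (hA : A.PosDef) (hB : B.IsHermitian) :
    HasDerivAt (fun s : ℝ => matLog (A + s • B))
      (∫ u in Set.Ioi (0 : ℝ),
        (A + u • (1 : Matrix (Fin n) (Fin n) ℂ))⁻¹ * B *
          (A + u • (1 : Matrix (Fin n) (Fin n) ℂ))⁻¹) 0 ∧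
    ∀ ρ : Matrix (Fin n) (Fin n) ℂ,
      (ρ * ∫ u in Set.Ioi (0 : ℝ),
          (A + u • (1 : Matrix (Fin n) (Fin n) ℂ))⁻¹ * B *
            (A + u • (1 : Matrix (Fin n) (Fin n) ℂ))⁻¹).trace =
        ((∫ u in Set.Ioi (0 : ℝ),
            (A + u • (1 : Matrix (Fin n) (Fin n) ℂ))⁻¹ * ρ *
              (A + u • (1 : Matrix (Fin n) (Fin n) ℂ))⁻¹) * B).trace := by
  exact main_aux A B hA hB
end

section
/- Let A be a positive definite matrix with eigenvectors A|i⟩ = a_i|i⟩, and let B be a Hermitian matrix. Then for all i, j, ⟨i| (log(A+sB) − log A) |j⟩ = s ⟨i|B|j⟩ (log a_i − log a_j)/(a_i − a_j) + O(s²), with the convention that the difference quotient (log a_i − log a_j)/(a_i − a_j) equals 1/a_i when a_i = a_j. -/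
open Matrix Asymptotics

open Classical in
/-- The logarithmic difference quotient `(log a − log b)/(a − b)`, with the convention that it
equals `1/a` on the diagonal `a = b`. -/
noncomputable def logDiffQuot (a b : ℝ) : ℝ :=
  if a = b then 1 / a else (Real.log a - Real.log b) / (a - b)

theorem matLog_spec_aux {n : ℕ} (M : Matrix (Fin n) (Fin n) ℂ) (hM : M.IsHermitian) :
    ∃ (U : Matrix (Fin n) (Fin n) ℂ) (m : Fin n → ℝ), U * Uᴴ = 1 ∧ Uᴴ * U = 1 ∧
      M * U = U * diagonal (fun k => (m k : ℂ)) ∧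
      matLog M = U * diagonal (fun k => (Real.log (m k) : ℂ)) * Uᴴ := by
  have h1 : (hM.eigenvectorUnitary : Matrix (Fin n) (Fin n) ℂ) *
      (hM.eigenvectorUnitary : Matrix (Fin n) (Fin n) ℂ)ᴴ = 1 :=
    Unitary.coe_mul_star_self hM.eigenvectorUnitary
  have h2 : (hM.eigenvectorUnitary : Matrix (Fin n) (Fin n) ℂ)ᴴ *
      (hM.eigenvectorUnitary : Matrix (Fin n) (Fin n) ℂ) = 1 :=
    Unitary.coe_star_mul_self hM.eigenvectorUnitary
  refine ⟨hM.eigenvectorUnitary, hM.eigenvalues, h1, h2, ?_, ?_⟩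
  · have := hM.spectral_theorem
    rw [Unitary.conjStarAlgAut_apply] at this
    have h3 : M * (hM.eigenvectorUnitary : Matrix (Fin n) (Fin n) ℂ) =
      ((hM.eigenvectorUnitary : Matrix (Fin n) (Fin n) ℂ) *
        diagonal (fun k => (hM.eigenvalues k : ℂ)) *
        (hM.eigenvectorUnitary : Matrix (Fin n) (Fin n) ℂ)ᴴ) *
        (hM.eigenvectorUnitary : Matrix (Fin n) (Fin n) ℂ) :=
      congrArg (· * (hM.eigenvectorUnitary : Matrix (Fin n) (Fin n) ℂ)) this
    rw [h3, Matrix.mul_assoc, h2, Matrix.mul_one]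
  · rw [matLog, hM.cfc_eq, Matrix.IsHermitian.cfc, Unitary.conjStarAlgAut_apply]
    rfl

theorem logDiffQuot_eq_dslope (a b : ℝ) : logDiffQuot a b = dslope Real.log a b := by
  unfold logDiffQuot
  split_ifs with h
  · subst h; simp
  · rw [dslope_of_ne _ (Ne.symm h), slope_def_field, ← neg_sub (Real.log b), ← neg_sub b a,
      neg_div_neg_eq]

theorem dslope_analytic_aux {f : ℝ → ℝ} (hf : ∀ x, 0 < x → AnalyticAt ℝ f x) {z : ℝ}
    (hz : 0 < z) : DifferentiableOn ℝ (dslope f z) (Set.Ioi 0) := by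
  intro x hx
  apply DifferentiableAt.differentiableWithinAt
  by_cases h : x = z
  · subst h
    obtain ⟨p, hp⟩ := hf x hx
    exact hp.has_fpower_series_dslope_fslope.analyticAt.differentiableAt
  · exact (differentiableAt_dslope_of_ne h).2 (hf x hx).differentiableAt

theorem second_slope_bound (z y : ℝ) (hz : 0 < z) (hy : 0 < y) (S : Set ℝ) (hS : IsCompact S)
    (hS0 : S ⊆ Set.Ioi 0) : ∃ h : ℝ → ℝ, ∃ K : ℝ, (∀ x ∈ S, |h x| ≤ K) ∧
      ∀ x, Real.log x - Real.log z =
        (x - z) * logDiffQuot z y + h x * ((x - z) * (x - y)) := by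
  have hd := dslope_analytic_aux (f := Real.log) (fun x hx => analyticAt_log hx) hz
  have hc : ContinuousOn (dslope (dslope Real.log z) y) (Set.Ioi 0) :=
    (continuousOn_dslope (Ioi_mem_nhds hy)).2
      ⟨hd.continuousOn, hd.differentiableAt (Ioi_mem_nhds hy)⟩
  obtain ⟨K, hK⟩ := hS.exists_bound_of_continuousOn (hc.mono hS0)
  refine ⟨dslope (dslope Real.log z) y, K, hK, fun x => ?_⟩
  have e1 := sub_smul_dslope Real.log z x
  have e2 := sub_smul_dslope (dslope Real.log z) y x
  rw [smul_eq_mul] at e1 e2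
  rw [logDiffQuot_eq_dslope]
  linear_combination -e1 - (x - z) * e2

/-- the data of an eigenbasis of the perturbed matrix, in the eigenbasis of `A`. -/
theorem perturbed_spec_aux {n : ℕ} (A B V : Matrix (Fin n) (Fin n) ℂ)
    (hA : A.IsHermitian) (hB : B.IsHermitian) (a : Fin n → ℝ)
    (hV : Vᴴ * V = 1) (hAV : A * V = V * diagonal (fun k => (a k : ℂ))) (s : ℝ) :
    ∃ (U W C : Matrix (Fin n) (Fin n) ℂ) (m : Fin n → ℝ),
      Uᴴ * U = 1 ∧ W * Wᴴ = 1 ∧ Wᴴ * W = 1 ∧ C = Vᴴ * B * U ∧ C * Wᴴ = Vᴴ * B * V ∧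
      (∀ i k, ((m k : ℂ) - a i) * W i k = s * C i k) ∧
      Vᴴ * matLog (A + s • B) * V = W * diagonal (fun k => (Real.log (m k) : ℂ)) * Wᴴ := by
  have hM : (A + s • B).IsHermitian := hA.add (by
    rw [Matrix.IsHermitian, conjTranspose_smul, hB.eq]; simp)
  obtain ⟨U, m, h1, h2, h3, h4⟩ := matLog_spec_aux _ hM
  have hV' : V * Vᴴ = 1 := mul_eq_one_comm.1 hV
  have hAV' : Vᴴ * A = diagonal (fun k => (a k : ℂ)) * Vᴴ := by
    have := congrArg conjTranspose hAV
    rw [conjTranspose_mul, conjTranspose_mul, hA.eq, diagonal_conjTranspose] at this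
    rw [this]; congr 2; ext k; simp
  refine ⟨U, Vᴴ * U, Vᴴ * B * U, m, h2, ?_, ?_, rfl, ?_, ?_, ?_⟩
  · rw [conjTranspose_mul, conjTranspose_conjTranspose, Matrix.mul_assoc, ← Matrix.mul_assoc U,
      h1, Matrix.one_mul, hV]
  · rw [conjTranspose_mul, conjTranspose_conjTranspose, Matrix.mul_assoc, ← Matrix.mul_assoc V,
      hV', Matrix.one_mul, h2]
  · rw [conjTranspose_mul, conjTranspose_conjTranspose, Matrix.mul_assoc, ← Matrix.mul_assoc U,
      h1, Matrix.one_mul]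
  · intro i k
    have e : (Vᴴ * U) * diagonal (fun k => (m k : ℂ)) =
        diagonal (fun k => (a k : ℂ)) * (Vᴴ * U) + s • (Vᴴ * B * U) := by
      rw [Matrix.mul_assoc, ← h3, Matrix.add_mul, Matrix.mul_add, ← Matrix.mul_assoc, hAV',
        Matrix.mul_assoc, Matrix.smul_mul, Matrix.mul_smul, Matrix.mul_assoc]
    have e' := congrFun (congrFun e i) k
    rw [mul_diagonal, Matrix.add_apply, diagonal_mul, Matrix.smul_apply, Complex.real_smul] at e'
    linear_combination e'
  · rw [h4, conjTranspose_mul, conjTranspose_conjTranspose]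
    simp only [Matrix.mul_assoc]

theorem entry_aux {n : ℕ} (W : Matrix (Fin n) (Fin n) ℂ) (d : Fin n → ℂ) (i j : Fin n) :
    (W * diagonal d * Wᴴ) i j = ∑ k, d k * (W i k * star (W j k)) := by
  rw [Matrix.mul_apply]
  refine Finset.sum_congr rfl fun k _ => ?_
  rw [mul_diagonal, conjTranspose_apply]; ring

theorem matLog_unperturbed_aux {n : ℕ} (A V : Matrix (Fin n) (Fin n) ℂ)
    (hA : A.IsHermitian) (a : Fin n → ℝ)
    (hV : Vᴴ * V = 1) (hAV : A * V = V * diagonal (fun k => (a k : ℂ))) :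
    Vᴴ * matLog A * V = diagonal (fun k => (Real.log (a k) : ℂ)) := by
  obtain ⟨U, W, C, m, -, hW, -, -, -, hm, hL⟩ :=
    perturbed_spec_aux A 0 V hA (by simp [Matrix.IsHermitian]) a hV hAV 0
  simp only [zero_smul, add_zero, Complex.ofReal_zero, zero_mul] at hL hm
  have : W * diagonal (fun k => (Real.log (m k) : ℂ)) =
      diagonal (fun k => (Real.log (a k) : ℂ)) * W := by
    ext i k
    rw [mul_diagonal, diagonal_mul]
    rcases mul_eq_zero.1 (hm i k) with h | h
    · have : m k = a i := by exact_mod_cast sub_eq_zero.1 h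
      rw [this, mul_comm]
    · simp [h]
  rw [hL, this, Matrix.mul_assoc, hW, Matrix.mul_one]

theorem norm_le_one_aux {n : ℕ} (W : Matrix (Fin n) (Fin n) ℂ) (h : Wᴴ * W = 1) (i k : Fin n) :
    ‖W i k‖ ≤ 1 :=
  entry_norm_bound_of_unitary (mem_unitaryGroup_iff'.2 h) i k

theorem near_aux {n : ℕ} (W C : Matrix (Fin n) (Fin n) ℂ) (h : Wᴴ * W = 1) (a m : Fin n → ℝ)
    (s K δ : ℝ) (hδ : 0 < δ) (hC : ∀ i k, ‖C i k‖ ≤ K)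
    (hm : ∀ i k, ((m k : ℂ) - a i) * W i k = s * C i k)
    (hs : |s| * K * (n + 1) ≤ δ) (k : Fin n) : ∃ i, |m k - a i| ≤ δ := by
  by_contra! hcon
  have h1 : ∀ i, ‖W i k‖ ≤ 1 / (n + 1) := by
    intro i
    have e := congrArg norm (hm i k)
    rw [norm_mul, norm_mul, ← Complex.ofReal_sub, Complex.norm_real, Complex.norm_real,
      Real.norm_eq_abs, Real.norm_eq_abs] at e
    have h3 : δ * ‖W i k‖ ≤ |s| * K := by
      calc δ * ‖W i k‖ ≤ |m k - a i| * ‖W i k‖ := by gcongr; exact (hcon i).le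
        _ = |s| * ‖C i k‖ := e
        _ ≤ _ := by gcongr; exact hC i k
    have hn : (0 : ℝ) < n + 1 := by positivity
    rw [le_div_iff₀ hn]
    have : δ * (‖W i k‖ * (n + 1)) ≤ δ * 1 := by nlinarith
    exact le_of_mul_le_mul_left this hδ
  have h2 := congrFun (congrFun h k) k
  rw [Matrix.mul_apply, one_apply_eq] at h2
  have h3 : (1 : ℝ) ≤ ∑ i, ‖Wᴴ k i * W i k‖ := by
    have := norm_sum_le Finset.univ (fun i => Wᴴ k i * W i k)
    rwa [h2, norm_one] at this
  have h4 : ∑ i, ‖Wᴴ k i * W i k‖ ≤ ∑ i : Fin n, (1 / (n + 1) : ℝ) := by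
    refine Finset.sum_le_sum fun i _ => ?_
    rw [norm_mul, conjTranspose_apply, norm_star]
    have := norm_le_one_aux W h i k
    have := h1 i
    nlinarith [norm_nonneg (W i k)]
  rw [Finset.sum_const, Finset.card_univ, Fintype.card_fin, nsmul_eq_mul, mul_one_div] at h4
  have : (n : ℝ) / (n + 1) < 1 := by rw [div_lt_one (by positivity)]; linarith
  linarith

/-- first-order perturbation of the matrix logarithm in an eigenbasis.
Let `A` be positive definite Hermitian with orthonormal eigenbasis `v i` and eigenvalues
`a i > 0`, and let `B` be Hermitian. Then
`⟨i|(log(A+sB) − log A)|j⟩ = s ⟨i|B|j⟩ (log a_i − log a_j)/(a_i − a_j) + O(s²)`,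
with the convention that the difference quotient is `1/a_i` when `a_i = a_j`. -/
theorem matLog_first_order_perturbation_eigenbasis {n : ℕ}
    (A B : Matrix (Fin n) (Fin n) ℂ)
    (hA : A.IsHermitian) (hB : B.IsHermitian)
    (a : Fin n → ℝ) (v : Fin n → (Fin n → ℂ))
    (ha : ∀ i, 0 < a i)
    (heig : ∀ i, A.mulVec (v i) = (a i : ℂ) • v i)
    (horth : ∀ i j, star (v i) ⬝ᵥ v j = if i = j then 1 else 0)
    (i j : Fin n) :
    (fun s : ℝ =>
        star (v i) ⬝ᵥ (matLog (A + s • B)).mulVec (v j) -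
          star (v i) ⬝ᵥ (matLog A).mulVec (v j) -
          (s : ℂ) * (star (v i) ⬝ᵥ B.mulVec (v j)) * (logDiffQuot (a i) (a j) : ℂ))
      =O[nhds 0] (fun s : ℝ => s ^ 2) := by
  set V : Matrix (Fin n) (Fin n) ℂ := Matrix.of fun p q => v q p with hVdef
  have hsand : ∀ (M : Matrix (Fin n) (Fin n) ℂ) (p q : Fin n),
      star (v p) ⬝ᵥ M.mulVec (v q) = (Vᴴ * M * V) p q := by
    intro M p q
    rw [Matrix.mul_assoc]
    rfl
  have hV : Vᴴ * V = 1 := by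
    ext p q
    rw [one_apply]
    exact horth p q
  have hAV : A * V = V * diagonal (fun k => (a k : ℂ)) := by
    ext p q
    rw [mul_diagonal, mul_comm]
    exact congrFun (heig q) p
  simp only [hsand]
  rw [matLog_unperturbed_aux A V hA a hV hAV]
  -- uniform bound on the matrix elements of `B`
  obtain ⟨K, hK0, hK⟩ : ∃ K : ℝ, 0 ≤ K ∧ ∀ U : Matrix (Fin n) (Fin n) ℂ, Uᴴ * U = 1 →
      ∀ p k, ‖(Vᴴ * B * U) p k‖ ≤ K := by
    refine ⟨∑ p, ∑ q, ‖(Vᴴ * B) p q‖, by positivity, fun U hU p k => ?_⟩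
    rw [Matrix.mul_apply]
    calc _ ≤ ∑ q, ‖(Vᴴ * B) p q * U q k‖ := norm_sum_le _ _
      _ ≤ ∑ q, ‖(Vᴴ * B) p q‖ := by
        refine Finset.sum_le_sum fun q _ => ?_
        rw [norm_mul]
        exact mul_le_of_le_one_right (norm_nonneg _) (norm_le_one_aux U hU q k)
      _ ≤ _ := Finset.single_le_sum (f := fun p => ∑ q, ‖(Vᴴ * B) p q‖)
        (fun _ _ => by positivity) (Finset.mem_univ p)
  obtain ⟨δ, hδ, hδa⟩ : ∃ δ : ℝ, 0 < δ ∧ ∀ p, δ < a p := by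
    have : Nonempty (Fin n) := ⟨i⟩
    obtain ⟨p, hp⟩ := Finite.exists_min a
    exact ⟨a p / 2, half_pos (ha p), fun q => by linarith [hp q, ha p]⟩
  obtain ⟨h, K2, hK2, hh⟩ := second_slope_bound (a i) (a j) (ha i) (ha j)
    (⋃ p, Metric.closedBall (a p) δ) (isCompact_iUnion fun p => isCompact_closedBall _ _) (by
      intro x hx
      obtain ⟨p, hp⟩ := Set.mem_iUnion.1 hx
      rw [Metric.mem_closedBall, Real.dist_eq, abs_le] at hp
      have := hδa p
      exact Set.mem_Ioi.2 (by linarith))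
  have hev : ∀ᶠ s : ℝ in nhds 0, |s| * K * (n + 1) < δ := by
    have hc : Continuous fun s : ℝ => |s| * K * (n + 1) := by fun_prop
    exact hc.continuousAt.eventually_lt continuousAt_const (by simpa using hδ)
  refine IsBigO.of_bound (∑ _k : Fin n, K2 * (K * K)) ?_
  filter_upwards [hev] with s hs
  obtain ⟨U, W, C, m, hU, hW, hW', hC, hCW, hm, hL⟩ :=
    perturbed_spec_aux A B V hA hB a hV hAV s
  have hCb : ∀ p k, ‖C p k‖ ≤ K := by rw [hC]; exact hK U hU
  have key : (Vᴴ * matLog (A + s • B) * V) i j - diagonal (fun k => (Real.log (a k) : ℂ)) i j -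
      (s : ℂ) * (Vᴴ * B * V) i j * (logDiffQuot (a i) (a j) : ℂ) =
      ∑ k, (h (m k) : ℂ) * ((s * C i k) * (s * star (C j k))) := by
    have hdiag : diagonal (fun k => (Real.log (a k) : ℂ)) i j =
        ∑ k, (Real.log (a i) : ℂ) * (W i k * star (W j k)) := by
      rw [← Finset.mul_sum]
      have := congrFun (congrFun hW i) j
      rw [Matrix.mul_apply] at this
      simp only [conjTranspose_apply] at this
      rw [this, one_apply, diagonal_apply]
      simp
    rw [hL, entry_aux, hdiag, ← hCW, Matrix.mul_apply, Finset.mul_sum, Finset.sum_mul,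
      ← Finset.sum_sub_distrib, ← Finset.sum_sub_distrib]
    refine Finset.sum_congr rfl fun k _ => ?_
    have e1 := hm i k
    have e2 := congrArg star (hm j k)
    simp only [star_mul', star_sub, Complex.star_def, Complex.conj_ofReal] at e2
    have e3 : ((Real.log (m k) : ℝ) : ℂ) - (Real.log (a i) : ℝ) =
        ((m k : ℂ) - a i) * (logDiffQuot (a i) (a j) : ℂ) +
          (h (m k) : ℂ) * (((m k : ℂ) - a i) * ((m k : ℂ) - a j)) := by
      exact_mod_cast hh (m k)
    simp only [conjTranspose_apply, Complex.star_def]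
    rw [← e2, ← e1]
    linear_combination (W i k * (starRingEnd ℂ) (W j k)) * e3 +
      (logDiffQuot (a i) (a j) : ℂ) * (starRingEnd ℂ) (W j k) * e1
  rw [key, Finset.sum_mul]
  refine (norm_sum_le _ _).trans (Finset.sum_le_sum fun k _ => ?_)
  obtain ⟨p, hp⟩ := near_aux W C hW' a m s K δ hδ hCb hm hs.le k
  have hb : |h (m k)| ≤ K2 :=
    hK2 _ (Set.mem_iUnion.2 ⟨p, by rwa [Metric.mem_closedBall, Real.dist_eq]⟩)
  have hK20 : 0 ≤ K2 := (abs_nonneg _).trans hb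
  simp only [norm_mul, norm_star, Complex.norm_real, Real.norm_eq_abs, norm_pow, sq_abs]
  calc |h (m k)| * (|s| * ‖C i k‖ * (|s| * ‖C j k‖))
      = |h (m k)| * (‖C i k‖ * ‖C j k‖) * (|s| * |s|) := by ring
    _ ≤ K2 * (K * K) * (|s| * |s|) := by
      gcongr
      · exact hCb i k
      · exact hCb j k
    _ = K2 * (K * K) * s ^ 2 := by rw [abs_mul_abs_self, sq]
end
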